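/- (Necessary step-size condition for accuracy, from the proof of Theorem 5) Let f(x) = (m/2)·Σ_{i=1}^d x_i² + (L/2)·Σ_{i=d+1}^{2d} x_i² on ℝ^{2d} with m = 1 and L ≥ 4, and let μ be the probability measure on ℝ^{2d} with density proportional to exp(−f). Run LMC from x₀ = (1,1,…,1) ∈ ℝ^{2d} with step size h, 0 < h < 2/L. If for some k ≥ 1 and some ε > 0 one has W₂(Law(x̄_k), μ) ≤ ε, then the step size must satisfy h ≤ 4ε/√d. -/

import Mathlib

open MeasureTheory ProbabilityTheory Real
open scoped ENNReal NNReal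

noncomputable section

/-- `ℝ^d` with the Euclidean structure. -/
abbrev Euc (d : ℕ) := EuclideanSpace ℝ (Fin d)

/-- The standard Gaussian measure `N(0, I_d)` on `ℝ^d`. -/
noncomputable def stdGaussian (d : ℕ) : Measure (Euc d) :=
  (Measure.pi fun _ : Fin d => gaussianReal 0 1).map (EuclideanSpace.equiv (Fin d) ℝ).symm

/-- The centered Gaussian measure on `ℝ^d` with covariance `σ2 • I_d`. -/
noncomputable def isoGaussian (d : ℕ) (σ2 : ℝ) : Measure (Euc d) :=
  (stdGaussian d).map fun x => Real.sqrt σ2 • x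

/-- `B` is a standard `d`-dimensional Brownian motion with respect to the filtration `ℱ`
under the probability measure `P`. -/
structure IsStdBrownian {d : ℕ} {Ω : Type*} {mΩ : MeasurableSpace Ω} (P : Measure Ω)
    (ℱ : Filtration ℝ mΩ) (B : ℝ → Ω → Euc d) : Prop where
  init : ∀ ω, B 0 ω = 0
  cont : ∀ ω, Continuous fun t => B t ω
  adapted : StronglyAdapted ℱ B
  incr_law : ∀ s t : ℝ, 0 ≤ s → s ≤ t →
    P.map (fun ω => B t ω - B s ω) = isoGaussian d (t - s)
  incr_indep : ∀ s t : ℝ, 0 ≤ s → s ≤ t →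
    Indep (MeasurableSpace.comap (fun ω => B t ω - B s ω) inferInstance) (ℱ s) P

/-- `X` is a (pathwise) solution of the overdamped Langevin dynamics
`dX_t = -∇f(X_t) dt + √2 dB_t`: a continuous adapted process satisfying the integral
equation `X_t = X_0 - ∫₀ᵗ ∇f(X_s) ds + √2 B_t` for all `t ≥ 0`. -/
structure IsLangevinSolution {d : ℕ} {Ω : Type*} {mΩ : MeasurableSpace Ω}
    (ℱ : Filtration ℝ mΩ) (f : Euc d → ℝ) (B : ℝ → Ω → Euc d) (X : ℝ → Ω → Euc d) : Prop where
  cont : ∀ ω, Continuous fun t => X t ω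
  adapted : StronglyAdapted ℱ X
  eqn : ∀ ω, ∀ t : ℝ, 0 ≤ t →
    X t ω = X 0 ω - (∫ s in (0:ℝ)..t, gradient f (X s ω)) + Real.sqrt 2 • B t ω

/-- The Hessian bounds `m • I ≼ ∇²f(x) ≼ L • I` for all `x`, expressed through the second
iterated Fréchet derivative: `m ‖v‖² ≤ ⟨v, ∇²f(x) v⟩ ≤ L ‖v‖²`. -/
def HessianBounds {d : ℕ} (m L : ℝ) (f : Euc d → ℝ) : Prop :=
  ∀ x v : Euc d, m * ‖v‖ ^ 2 ≤ iteratedFDeriv ℝ 2 f x ![v, v] ∧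
    iteratedFDeriv ℝ 2 f x ![v, v] ≤ L * ‖v‖ ^ 2


/-- The 2-Wasserstein distance:
`W₂(μ, ν) = inf over couplings γ of (∫ ‖x - y‖² dγ)^{1/2}`, where a coupling of `μ` and `ν`
is a probability measure on the product space whose marginals are `μ` and `ν`. -/
noncomputable def W2 {α : Type*} [MeasurableSpace α] [NormedAddCommGroup α]
    (μ ν : Measure α) : ℝ :=
  Real.sqrt (ENNReal.toReal
    (⨅ γ ∈ {γ : Measure (α × α) |
        IsProbabilityMeasure γ ∧ γ.map Prod.fst = μ ∧ γ.map Prod.snd = ν},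
      ∫⁻ p, (‖p.1 - p.2‖₊ : ℝ≥0∞) ^ 2 ∂γ))

/-- `μ` is the probability measure with density proportional to `exp (-f)` with respect to
Lebesgue measure. -/
def IsGibbs {d : ℕ} (f : Euc d → ℝ) (μ : Measure (Euc d)) : Prop :=
  IsProbabilityMeasure μ ∧ ∃ c : ℝ≥0∞, c ≠ 0 ∧ c ≠ ⊤ ∧
    μ = c • (volume : Measure (Euc d)).withDensity fun x => ENNReal.ofReal (Real.exp (-f x))


/-- The quadratic potential `f(x) = (m/2) Σ_{i<d} x_i² + (L/2) Σ_{d ≤ i < 2d} x_i²` on `ℝ^{2d}`. -/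
noncomputable def fquad (d : ℕ) (m L : ℝ) : Euc (2 * d) → ℝ :=
  fun x => ∑ i : Fin (2 * d), ((if (i : ℕ) < d then m else L) / 2) * x i ^ 2

/-! Along each coordinate, LMC for a diagonal quadratic potential is the autoregression
`x ↦ (1 - hλ) x + √(2h) z`. Writing `t = hλ` and `a = (1 - t)ᵏ`, the variance of its `k`-th iterate
is `v / λ` with `v (1 - t/2) = 1 - a²`, whereas the target has mean `0` and variance `1/λ`. Hence
the iterate either keeps a mean of relative size `|a| ≥ t/4`, or its standard deviation is too
large by a factor `√v ≥ 1 + t/4`. Any coupling pays for both the mean and the standard deviation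
gap, and squared costs add up over the coordinates. -/

section Moments

variable {Ω : Type*} {mΩ : MeasurableSpace Ω} {P : Measure Ω} {X Y : Ω → ℝ}

lemma sq_covariance_le [IsFiniteMeasure P] (hX : MemLp X 2 P) (hY : MemLp Y 2 P) :
    cov[X, Y; P] ^ 2 ≤ Var[X; P] * Var[Y; P] := by
  have hquad : ∀ t : ℝ, 0 ≤ Var[Y; P] * (t * t) + -2 * cov[X, Y; P] * t + Var[X; P] := fun t =>
    calc 0 ≤ Var[X - t • Y; P] := variance_nonneg _ _
      _ = Var[Y; P] * (t * t) + -2 * cov[X, Y; P] * t + Var[X; P] := by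
        rw [variance_sub hX (hY.const_smul t), variance_smul, covariance_smul_right]
        ring
  have hdiscrim := discrim_le_zero hquad
  rw [discrim] at hdiscrim
  linarith

lemma sq_integral_sub_add_sq_sqrt_variance_sub_le [IsProbabilityMeasure P]
    (hX : MemLp X 2 P) (hY : MemLp Y 2 P) :
    (P[X] - P[Y]) ^ 2 + (√Var[X; P] - √Var[Y; P]) ^ 2 ≤ ∫ ω, (X ω - Y ω) ^ 2 ∂P := by
  have hcov : cov[X, Y; P] ≤ √Var[X; P] * √Var[Y; P] := by
    rw [← Real.sqrt_mul (variance_nonneg X P)]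
    exact Real.le_sqrt_of_sq_le (sq_covariance_le hX hY)
  have hmean : P[X - Y] = P[X] - P[Y] :=
    integral_sub (hX.integrable one_le_two) (hY.integrable one_le_two)
  have hvar : Var[X - Y; P] = ∫ ω, (X ω - Y ω) ^ 2 ∂P - (P[X] - P[Y]) ^ 2 := by
    rw [variance_eq_sub (hX.sub hY), hmean]
    rfl
  rw [variance_sub hX hY] at hvar
  linarith [Real.sq_sqrt (variance_nonneg X P), Real.sq_sqrt (variance_nonneg Y P)]

end Moments

section Wasserstein

lemma le_sq_W2 {E : Type*} [NormedAddCommGroup E] [MeasurableSpace E] {μ ν : Measure E}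
    [IsProbabilityMeasure μ] [IsProbabilityMeasure ν] (hμ : MemLp id 2 μ) (hν : MemLp id 2 ν)
    {b : ℝ} (hb : ∀ γ : Measure (E × E), IsProbabilityMeasure γ → γ.map Prod.fst = μ →
      γ.map Prod.snd = ν → b ≤ ∫ p, ‖p.1 - p.2‖ ^ 2 ∂γ) :
    b ≤ W2 μ ν ^ 2 := by
  have hcost : ∀ γ : Measure (E × E), γ.map Prod.fst = μ → γ.map Prod.snd = ν →
      ∫⁻ p, (‖p.1 - p.2‖₊ : ℝ≥0∞) ^ 2 ∂γ = ENNReal.ofReal (∫ p, ‖p.1 - p.2‖ ^ 2 ∂γ) := by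
    rintro γ rfl rfl
    have hint : Integrable (fun p : E × E => ‖p.1 - p.2‖ ^ 2) γ :=
      ((hμ.comp_of_map measurable_fst.aemeasurable).sub
        (hν.comp_of_map measurable_snd.aemeasurable)).integrable_norm_pow two_ne_zero
    rw [ofReal_integral_eq_lintegral_ofReal hint (ae_of_all _ fun p => by positivity)]
    refine lintegral_congr fun p => ?_
    rw [ENNReal.ofReal_pow (norm_nonneg _), ofReal_norm, enorm_eq_nnnorm]
  rw [W2, Real.sq_sqrt ENNReal.toReal_nonneg]
  -- The infimum must be finite, as `ENNReal.toReal ⊤ = 0`; the product coupling shows that it is.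
  refine (ENNReal.ofReal_le_iff_le_toReal (ne_top_of_le_ne_top ?_ (iInf₂_le (μ.prod ν)
    ⟨inferInstance, Measure.fst_prod, Measure.snd_prod⟩))).1 (le_iInf₂ ?_)
  · rw [hcost _ Measure.fst_prod Measure.snd_prod]
    exact ENNReal.ofReal_ne_top
  · rintro γ ⟨hγ, hfst, hsnd⟩
    rw [hcost γ hfst hsnd]
    exact ENNReal.ofReal_le_ofReal (hb γ hγ hfst hsnd)

lemma sum_sq_integral_sub_add_sq_sqrt_variance_sub_le_sq_W2 {n : ℕ} {μ ν : Measure (Euc n)}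
    [IsProbabilityMeasure μ] [IsProbabilityMeasure ν] (hμ : MemLp id 2 μ) (hν : MemLp id 2 ν) :
    ∑ i, ((∫ x, x i ∂μ - ∫ x, x i ∂ν) ^ 2 +
      (√Var[fun x => x i; μ] - √Var[fun x => x i; ν]) ^ 2) ≤ W2 μ ν ^ 2 := by
  refine le_sq_W2 hμ hν ?_
  rintro γ _ rfl rfl
  have hfst := (hμ.comp_of_map measurable_fst.aemeasurable).eval_piLp
  have hsnd := (hν.comp_of_map measurable_snd.aemeasurable).eval_piLp
  have hint : ∀ i ∈ Finset.univ, Integrable (fun p : Euc n × Euc n => (p.1 i - p.2 i) ^ 2) γ :=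
    fun i _ => ((hfst i).sub (hsnd i)).integrable_sq
  simp only [EuclideanSpace.real_norm_sq_eq, PiLp.sub_apply]
  rw [integral_finsetSum _ hint]
  refine Finset.sum_le_sum fun i _ => ?_
  rw [integral_map (by fun_prop) (by fun_prop), integral_map (by fun_prop) (by fun_prop),
    variance_map (by fun_prop) (by fun_prop), variance_map (by fun_prop) (by fun_prop)]
  exact sq_integral_sub_add_sq_sqrt_variance_sub_le (hfst i) (hsnd i)

end Wasserstein

section QuadraticPotential

variable {n : ℕ}

/-- The quadratic potential `x ↦ ∑ i, (lam i / 2) * x i ^ 2` with Hessian `diag lam`; `fquad` is the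
case of two eigenvalues. -/
def diagQuadratic (lam : Fin n → ℝ) : Euc n → ℝ :=
  fun x => ∑ i, lam i / 2 * x i ^ 2

lemma hasGradientAt_diagQuadratic (lam : Fin n → ℝ) (x : Euc n) :
    HasGradientAt (diagQuadratic lam) (WithLp.toLp 2 fun i => lam i * x i) x := by
  have hcoord : ∀ i, HasFDerivAt (fun y : Euc n => lam i / 2 * y i ^ 2)
      ((lam i * x i) • (EuclideanSpace.proj i : Euc n →L[ℝ] ℝ)) x := fun i => by
    refine (((EuclideanSpace.proj i : Euc n →L[ℝ] ℝ).hasFDerivAt.pow 2).const_mul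
      (lam i / 2)).congr_fderiv ?_
    ext y
    simp only [PiLp.proj_apply, Nat.add_one_sub_one, pow_one, nsmul_eq_mul, Nat.cast_ofNat,
      smul_apply, smul_eq_mul]
    ring
  refine hasGradientAt_iff_hasFDerivAt.2
    ((HasFDerivAt.fun_sum fun i _ => hcoord i).congr_fderiv ?_)
  ext y
  simp [PiLp.inner_apply, mul_comm]

end QuadraticPotential

section GaussianLaws

lemma pi_withDensity_ofReal {ι : Type*} [Fintype ι] {α : ι → Type*}
    {mα : ∀ i, MeasurableSpace (α i)} {μ : ∀ i, Measure (α i)} [∀ i, SigmaFinite (μ i)]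
    {f : ∀ i, α i → ℝ} (hf : ∀ i, Integrable (f i) (μ i)) (hf0 : ∀ i x, 0 ≤ f i x) :
    Measure.pi (fun i => (μ i).withDensity fun x => ENNReal.ofReal (f i x)) =
      (Measure.pi μ).withDensity fun x => ENNReal.ofReal (∏ i, f i (x i)) := by
  refine Measure.pi_eq fun s hs => ?_
  rw [withDensity_apply _ (MeasurableSet.univ_pi hs), Measure.restrict_pi_pi,
    ← ofReal_integral_eq_lintegral_ofReal (Integrable.fintype_prod_dep fun i => (hf i).restrict)
      (ae_of_all _ fun x => Finset.prod_nonneg fun i _ => hf0 i _),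
    integral_fintype_prod_eq_prod,
    ENNReal.ofReal_prod_of_nonneg fun i _ => integral_nonneg (hf0 i)]
  refine Finset.prod_congr rfl fun i _ => ?_
  rw [withDensity_apply _ (hs i),
    ofReal_integral_eq_lintegral_ofReal (hf i).restrict (ae_of_all _ (hf0 i))]

lemma map_withDensity_comp {α β : Type*} {mα : MeasurableSpace α} {mβ : MeasurableSpace β}
    {μ : Measure α} {ν : Measure β} {e : α → β} (he : MeasurePreserving e μ ν)
    {g : β → ℝ≥0∞} (hg : Measurable g) :
    (μ.withDensity fun x => g (e x)).map e = ν.withDensity g := by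
  ext s hs
  rw [Measure.map_apply he.measurable hs, withDensity_apply _ (he.measurable hs),
    withDensity_apply _ hs, he.setLIntegral_comp_preimage hs hg]

lemma exp_neg_mul_sq_eq_mul_gaussianPDFReal {l : ℝ} (hl : 0 < l) (x : ℝ) :
    Real.exp (-(l / 2 * x ^ 2)) = √(2 * π / l) * gaussianPDFReal 0 l⁻¹.toNNReal x := by
  have hsqrt : √(2 * π / l) ≠ 0 := by positivity
  rw [gaussianPDFReal, Real.coe_toNNReal _ (inv_nonneg.2 hl.le), ← div_eq_mul_inv, ← mul_assoc,
    mul_inv_cancel₀ hsqrt, one_mul]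
  congr 1
  field_simp
  ring

variable {n : ℕ} {lam : Fin n → ℝ}

lemma map_toLp_pi_gaussianReal_inv (hlam : ∀ i, 0 < lam i) :
    (Measure.pi fun i => gaussianReal 0 (lam i)⁻¹.toNNReal).map (WithLp.toLp 2) =
      (volume : Measure (Euc n)).withDensity
        fun x => ENNReal.ofReal (∏ i, gaussianPDFReal 0 (lam i)⁻¹.toNNReal (x i)) := by
  have hvar : ∀ i, (lam i)⁻¹.toNNReal ≠ 0 := fun i =>
    (Real.toNNReal_pos.2 (inv_pos.2 (hlam i))).ne'
  simp only [gaussianReal_of_var_ne_zero _ (hvar _), gaussianPDF_def]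
  rw [pi_withDensity_ofReal (fun i => integrable_gaussianPDFReal _ _)
    fun i => gaussianPDFReal_nonneg _ _]
  exact map_withDensity_comp (PiLp.volume_preserving_toLp (Fin n))
    (g := fun x => ENNReal.ofReal (∏ i, gaussianPDFReal 0 (lam i)⁻¹.toNNReal (x i)))
    (by fun_prop)

lemma eq_map_pi_gaussianReal_of_isGibbs_diagQuadratic (hlam : ∀ i, 0 < lam i)
    {μ : Measure (Euc n)} (hμ : IsGibbs (diagQuadratic lam) μ) :
    μ = (Measure.pi fun i => gaussianReal 0 (lam i)⁻¹.toNNReal).map (WithLp.toLp 2) := by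
  obtain ⟨hprob, c, -, -, hdensity⟩ := hμ
  set ν := (Measure.pi fun i => gaussianReal 0 (lam i)⁻¹.toNNReal).map (WithLp.toLp 2) with hν
  have : IsProbabilityMeasure ν := Measure.isProbabilityMeasure_map (by fun_prop)
  set K : ℝ := ∏ i, √(2 * π / lam i) with hK
  have hexp : ∀ x, Real.exp (-diagQuadratic lam x) =
      K * ∏ i, gaussianPDFReal 0 (lam i)⁻¹.toNNReal (x i) := fun x => by
    rw [hK, ← Finset.prod_mul_distrib, diagQuadratic, ← Finset.sum_neg_distrib, Real.exp_sum]
    exact Finset.prod_congr rfl fun i _ => exp_neg_mul_sq_eq_mul_gaussianPDFReal (hlam i) (x i)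
  have hsmul : μ = (c * ENNReal.ofReal K) • ν := by
    rw [hdensity, hν, map_toLp_pi_gaussianReal_inv hlam, mul_smul,
      ← withDensity_smul' _ _ ENNReal.ofReal_ne_top]
    simp only [hexp, ENNReal.ofReal_mul (show 0 ≤ K by positivity)]
    rfl
  have hmass : c * ENNReal.ofReal K = 1 := by
    simpa using (congrArg (fun ρ => ρ Set.univ) hsmul).symm
  rw [hsmul, hmass, one_smul]

lemma hasLaw_apply_map_toLp_pi {ι : Type*} [Fintype ι] (ν : ι → Measure ℝ)
    [∀ i, IsProbabilityMeasure (ν i)] (i : ι) :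
    HasLaw (fun x : EuclideanSpace ℝ ι => x i) (ν i) ((Measure.pi ν).map (WithLp.toLp 2)) where
  map_eq := by
    rw [Measure.map_map (by fun_prop) (by fun_prop)]
    exact (measurePreserving_eval ν i).map_eq

lemma hasLaw_apply_of_isGibbs_diagQuadratic (hlam : ∀ i, 0 < lam i) {μ : Measure (Euc n)}
    (hμ : IsGibbs (diagQuadratic lam) μ) (i : Fin n) :
    HasLaw (fun x => x i) (gaussianReal 0 (lam i)⁻¹.toNNReal) μ := by
  rw [eq_map_pi_gaussianReal_of_isGibbs_diagQuadratic hlam hμ]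
  exact hasLaw_apply_map_toLp_pi (fun j => gaussianReal 0 (lam j)⁻¹.toNNReal) i

lemma hasLaw_apply_stdGaussian (i : Fin n) :
    HasLaw (fun x : Euc n => x i) (gaussianReal 0 1) (stdGaussian n) :=
  hasLaw_apply_map_toLp_pi (fun _ => gaussianReal 0 1) i

lemma memLp_two_of_hasLaw_gaussianReal {Ω : Type*} {mΩ : MeasurableSpace Ω} {P : Measure Ω}
    {X : Ω → ℝ} {m : ℝ} {v : ℝ≥0} (hX : HasLaw X (gaussianReal m v) P) : MemLp X 2 P := by
  have hid : MemLp id 2 (P.map X) := hX.map_eq ▸ memLp_id_gaussianReal 2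
  exact hid.comp_of_map hX.aemeasurable

end GaussianLaws

section WhiteNoise

variable {Ω : Type*} {mΩ : MeasurableSpace Ω} {P : Measure Ω}

/-- Unit-variance white noise: centred, square-integrable, pairwise uncorrelated real random
variables. Only these second-order properties of the Gaussian noise affect the means and variances
of LMC on a quadratic potential. -/
structure IsWhiteNoise (P : Measure Ω) (z : ℕ → Ω → ℝ) : Prop where
  memLp_two : ∀ k, MemLp (z k) 2 P
  integral_eq_zero : ∀ k, ∫ ω, z k ω ∂P = 0
  variance_eq_one : ∀ k, Var[z k; P] = 1
  covariance_eq_zero : ∀ ⦃j k⦄, j ≠ k → cov[z j, z k; P] = 0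

lemma isWhiteNoise_apply_of_iIndepFun_stdGaussian {n : ℕ} {ξ : ℕ → Ω → Euc n}
    (hlaw : ∀ k, HasLaw (ξ k) (stdGaussian n) P) (hindep : iIndepFun ξ P) (i : Fin n) :
    IsWhiteNoise P fun k ω => ξ k ω i := by
  have hcoord : ∀ k, HasLaw (fun ω => ξ k ω i) (gaussianReal 0 1) P := fun k =>
    (hasLaw_apply_stdGaussian i).fun_comp (hlaw k)
  have := hindep.isProbabilityMeasure
  refine ⟨fun k => memLp_two_of_hasLaw_gaussianReal (hcoord k), fun k => ?_, fun k => ?_,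
    fun j k hjk => ?_⟩
  · rw [(hcoord k).integral_eq, integral_id_gaussianReal]
  · rw [(hcoord k).variance_eq, variance_id_gaussianReal, NNReal.coe_one]
  · have hjk_indep : IndepFun (fun ω => ξ j ω i) (fun ω => ξ k ω i) P :=
      (hindep.indepFun hjk).comp (φ := fun x : Euc n => x i) (ψ := fun x : Euc n => x i)
        (by fun_prop) (by fun_prop)
    exact hjk_indep.covariance_eq_zero (memLp_two_of_hasLaw_gaussianReal (hcoord j))
      (memLp_two_of_hasLaw_gaussianReal (hcoord k))

/-- The process `x` is the first-order autoregression with coefficient `c`, noise scale `s` and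
noise `z`, started at the constant `b`. The noise index matches that of the iterate it produces, so
`z 0` does not enter. -/
structure IsAutoregressive (b c s : ℝ) (z x : ℕ → Ω → ℝ) : Prop where
  zero : x 0 = fun _ => b
  succ : ∀ k, x (k + 1) = fun ω => c * x k ω + s * z (k + 1) ω

namespace IsAutoregressive

variable {b c s : ℝ} {z x : ℕ → Ω → ℝ}

lemma memLp_two [IsFiniteMeasure P] (hx : IsAutoregressive b c s z x) (hz : IsWhiteNoise P z)
    (k : ℕ) : MemLp (x k) 2 P := by
  induction k with
  | zero => exact hx.zero ▸ memLp_const b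
  | succ k ih => exact hx.succ k ▸ (ih.const_mul c).add ((hz.memLp_two _).const_mul s)

variable [IsProbabilityMeasure P]

lemma integral_eq (hx : IsAutoregressive b c s z x) (hz : IsWhiteNoise P z) (k : ℕ) :
    ∫ ω, x k ω ∂P = c ^ k * b := by
  induction k with
  | zero => simp [hx.zero]
  | succ k ih =>
    rw [hx.succ, integral_add (((hx.memLp_two hz k).integrable one_le_two).const_mul c)
      (((hz.memLp_two _).integrable one_le_two).const_mul s), integral_const_mul,
      integral_const_mul, ih, hz.integral_eq_zero]
    ring

lemma covariance_noise_eq_zero (hx : IsAutoregressive b c s z x) (hz : IsWhiteNoise P z)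
    {k j : ℕ} (hkj : k < j) : cov[x k, z j; P] = 0 := by
  induction k with
  | zero => rw [hx.zero, covariance_const_left]
  | succ k ih =>
    have hadd := covariance_add_left ((hx.memLp_two hz k).const_smul c)
      ((hz.memLp_two (k + 1)).const_smul s) (hz.memLp_two j)
    rw [covariance_smul_left, covariance_smul_left, ih (by lia), hz.covariance_eq_zero hkj.ne,
      mul_zero, mul_zero, add_zero] at hadd
    rw [hx.succ]
    exact hadd

lemma variance_succ (hx : IsAutoregressive b c s z x) (hz : IsWhiteNoise P z) (k : ℕ) :
    Var[x (k + 1); P] = c ^ 2 * Var[x k; P] + s ^ 2 := by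
  rw [hx.succ, variance_fun_add ((hx.memLp_two hz k).const_mul c) ((hz.memLp_two _).const_mul s),
    variance_const_mul, variance_const_mul, covariance_const_mul_left, covariance_const_mul_right,
    hx.covariance_noise_eq_zero hz k.lt_succ_self, hz.variance_eq_one]
  ring

lemma variance_mul_one_sub_sq (hx : IsAutoregressive b c s z x) (hz : IsWhiteNoise P z) (k : ℕ) :
    Var[x k; P] * (1 - c ^ 2) = s ^ 2 * (1 - (c ^ k) ^ 2) := by
  induction k with
  | zero => simp [hx.zero, variance_eq_integral aemeasurable_const]
  | succ k ih =>
    rw [hx.variance_succ hz, pow_succ]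
    linear_combination c ^ 2 * ih

end IsAutoregressive

end WhiteNoise

section LangevinMonteCarlo

variable {n : ℕ} {Ω : Type*} {mΩ : MeasurableSpace Ω} {P : Measure Ω}

/-- The process `X` consists of the Langevin Monte Carlo iterates for the potential `f` with step
size `h`, noise `ξ` and deterministic initial point `x₀`. -/
structure IsLMC (f : Euc n → ℝ) (h : ℝ) (x₀ : Euc n) (ξ X : ℕ → Ω → Euc n) : Prop where
  zero : X 0 = fun _ => x₀
  succ : ∀ k, X (k + 1) = fun ω =>
    X k ω - h • gradient f (X k ω) + √(2 * h) • ξ (k + 1) ω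

variable {lam : Fin n → ℝ} {h : ℝ} {x₀ : Euc n} {ξ X : ℕ → Ω → Euc n}

lemma IsLMC.isAutoregressive_apply (hX : IsLMC (diagQuadratic lam) h x₀ ξ X) (i : Fin n) :
    IsAutoregressive (x₀ i) (1 - h * lam i) √(2 * h) (fun k ω => ξ k ω i) fun k ω => X k ω i where
  zero := by rw [hX.zero]
  succ k := by
    ext ω
    simp only [hX.succ, (hasGradientAt_diagQuadratic lam _).gradient, PiLp.add_apply,
      PiLp.sub_apply, PiLp.smul_apply, smul_eq_mul]
    ring

lemma sq_div_sixteen_le_of_mul_one_sub_half_eq {t v : ℝ} (ht : 0 ≤ t) {k : ℕ} (hk : k ≠ 0)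
    (hvar : v * (1 - t / 2) = 1 - ((1 - t) ^ k) ^ 2) :
    t ^ 2 / 16 ≤ ((1 - t) ^ k) ^ 2 + (√v - 1) ^ 2 := by
  rcases le_total t 2 with ht2 | ht2
  · rcases le_total (1 + t / 4) √v with hs | hs
    · have hgap : (t / 4) ^ 2 ≤ (√v - 1) ^ 2 := by gcongr; linarith
      linarith [sq_nonneg ((1 - t) ^ k)]
    · have hv_le : v ≤ (1 + t / 4) ^ 2 := (Real.sqrt_le_left (by positivity)).1 hs
      have hmean : 1 - (1 + t / 4) ^ 2 * (1 - t / 2) ≤ ((1 - t) ^ k) ^ 2 := by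
        have := mul_le_mul_of_nonneg_right hv_le (show 0 ≤ 1 - t / 2 by linarith)
        linarith
      have hcube : 0 ≤ t ^ 3 := by positivity
      nlinarith [sq_nonneg (√v - 1)]
  · have hmean : (1 - t) ^ 2 ≤ ((1 - t) ^ k) ^ 2 := by
      rw [pow_right_comm]
      exact le_self_pow₀ (by nlinarith) hk
    nlinarith [sq_nonneg (√v - 1)]

variable [IsProbabilityMeasure P]

lemma IsLMC.sq_mul_div_sixteen_le (hX : IsLMC (diagQuadratic lam) h x₀ ξ X) {i : Fin n}
    (hξ : IsWhiteNoise P fun k ω => ξ k ω i) (hh : 0 < h) (hlam : 0 < lam i)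
    (hx₀ : 1 ≤ lam i * x₀ i ^ 2) {k : ℕ} (hk : k ≠ 0) :
    h ^ 2 * lam i / 16 ≤
      (∫ ω, X k ω i ∂P) ^ 2 + (√Var[fun ω => X k ω i; P] - √(lam i)⁻¹) ^ 2 := by
  have hAR := hX.isAutoregressive_apply i
  set v := Var[fun ω => X k ω i; P]
  set a := (1 - h * lam i) ^ k
  have hvar : lam i * v * (1 - h * lam i / 2) = 1 - a ^ 2 := by
    have hrec := hAR.variance_mul_one_sub_sq hξ k
    rw [Real.sq_sqrt (by positivity)] at hrec
    refine mul_left_cancel₀ (show 2 * h ≠ 0 by positivity) ?_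
    linear_combination hrec
  have hgap := sq_div_sixteen_le_of_mul_one_sub_half_eq (by positivity) hk hvar
  have hstd : lam i * (√v - √(lam i)⁻¹) ^ 2 = (√(lam i * v) - 1) ^ 2 := by
    rw [Real.sqrt_mul hlam.le, Real.sqrt_inv]
    nth_rw 1 [← Real.sq_sqrt hlam.le]
    have : √(lam i) ≠ 0 := by positivity
    field_simp
  rw [hAR.integral_eq hξ k]
  refine le_of_mul_le_mul_left ?_ hlam
  calc lam i * (h ^ 2 * lam i / 16) = (h * lam i) ^ 2 / 16 := by ring
    _ ≤ a ^ 2 + (√(lam i * v) - 1) ^ 2 := hgap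
    _ ≤ a ^ 2 * (lam i * x₀ i ^ 2) + (√(lam i * v) - 1) ^ 2 := by
      gcongr
      exact le_mul_of_one_le_right (sq_nonneg a) hx₀
    _ = lam i * ((a * x₀ i) ^ 2 + (√v - √(lam i)⁻¹) ^ 2) := by
      rw [← hstd]
      ring

theorem lmc_step_size_necessary_condition_general (hlam : ∀ i, 0 < lam i)
    {μ : Measure (Euc n)} (hμ : IsGibbs (diagQuadratic lam) μ) (hh : 0 < h)
    (hξ : ∀ i, IsWhiteNoise P fun k ω => ξ k ω i) (hX : IsLMC (diagQuadratic lam) h x₀ ξ X)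
    {s : Finset (Fin n)} (hx₀ : ∀ i ∈ s, 1 ≤ lam i * x₀ i ^ 2) {k : ℕ} (hk : k ≠ 0) :
    h * √(∑ i ∈ s, lam i) ≤ 4 * W2 (P.map (X k)) μ := by
  have hX2 : MemLp (X k) 2 P :=
    .of_eval_piLp fun i => (hX.isAutoregressive_apply i).memLp_two (hξ i) k
  have hXm : AEMeasurable (X k) P := hX2.aestronglyMeasurable.aemeasurable
  have hμlaw := hasLaw_apply_of_isGibbs_diagQuadratic hlam hμ
  have hμ2 : MemLp id 2 μ := .of_eval_piLp fun i => memLp_two_of_hasLaw_gaussianReal (hμlaw i)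
  have hX2' : MemLp id 2 (P.map (X k)) :=
    (memLp_map_measure_iff aestronglyMeasurable_id hXm).2 hX2
  have := hμ.1
  have := Measure.isProbabilityMeasure_map (μ := P) hXm
  have hW2 := sum_sq_integral_sub_add_sq_sqrt_variance_sub_le_sq_W2 hX2' hμ2
  have hmean : ∀ i, ∫ x, x i ∂P.map (X k) = ∫ ω, X k ω i ∂P := fun i =>
    integral_map hXm (by fun_prop)
  have hvar : ∀ i, Var[fun x => x i; P.map (X k)] = Var[fun ω => X k ω i; P] := fun i =>
    variance_map (by fun_prop) hXm
  simp only [hmean, hvar, (hμlaw _).integral_eq, (hμlaw _).variance_eq, integral_id_gaussianReal,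
    variance_id_gaussianReal, sub_zero, Real.coe_toNNReal _ (inv_nonneg.2 (hlam _).le)] at hW2
  refine le_of_sq_le_sq ?_ (mul_nonneg zero_le_four (Real.sqrt_nonneg _))
  calc (h * √(∑ i ∈ s, lam i)) ^ 2 = 16 * ∑ i ∈ s, h ^ 2 * lam i / 16 := by
        rw [mul_pow, Real.sq_sqrt (Finset.sum_nonneg fun i _ => (hlam i).le), Finset.mul_sum,
          Finset.mul_sum]
        exact Finset.sum_congr rfl fun i _ => by ring
    _ ≤ 16 * ∑ i, ((∫ ω, X k ω i ∂P) ^ 2 + (√Var[fun ω => X k ω i; P] - √(lam i)⁻¹) ^ 2) := by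
        gcongr
        exact (Finset.sum_le_sum fun i hi => hX.sq_mul_div_sixteen_le (hξ i) hh (hlam i)
          (hx₀ i hi) hk).trans (Finset.sum_le_univ_sum_of_nonneg fun i => by positivity)
    _ ≤ (4 * W2 (P.map (X k)) μ) ^ 2 := by linarith

end LangevinMonteCarlo

/-- **Necessary step-size condition for accuracy** (from the proof of Theorem 5).
For the quadratic potential `f(x) = (1/2) Σ_{i<d} x_i² + (L/2) Σ_{d≤i<2d} x_i²` with `L ≥ 4`
(`d ≥ 1`), the Gaussian target `μ ∝ exp (-f)`, step size `0 < h < 2/L`, and initial point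
`x₀ = (1, …, 1)`: if `W₂(Law(x̄_k), μ) ≤ ε` for some `k ≥ 1` and `ε > 0`, then `h ≤ 4ε/√d`. -/
theorem lmc_step_size_necessary_condition
    {d : ℕ} (hd : 0 < d)
    {Ω : Type*} {mΩ : MeasurableSpace Ω} {P : Measure Ω} [IsProbabilityMeasure P]
    {L : ℝ} (hL : 4 ≤ L)
    {μ : Measure (Euc (2 * d))} (hμ : IsGibbs (fquad d 1 L) μ)
    {h : ℝ} (hh0 : 0 < h) (hh1 : h < 2 / L)
    {ξ : ℕ → Ω → Euc (2 * d)} (hξmeas : ∀ k, Measurable (ξ k))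
    (hξlaw : ∀ k, P.map (ξ k) = stdGaussian (2 * d))
    (hindep : iIndepFun ξ P)
    {Xb : ℕ → Ω → Euc (2 * d)} (hXb0 : Xb 0 = fun _ => WithLp.toLp 2 fun _ : Fin (2 * d) => (1 : ℝ))
    (hXb : ∀ k : ℕ, Xb (k + 1) = fun ω =>
      Xb k ω - h • gradient (fquad d 1 L) (Xb k ω) + Real.sqrt (2 * h) • ξ (k + 1) ω)
    {ε : ℝ} (hε : 0 < ε) {k : ℕ} (hk : 1 ≤ k)
    (hW2 : W2 (P.map (Xb k)) μ ≤ ε) :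
    h ≤ 4 * ε / Real.sqrt d := by
  have hnoise := isWhiteNoise_apply_of_iIndepFun_stdGaussian
    (fun k => ⟨(hξmeas k).aemeasurable, hξlaw k⟩) hindep
  have hsum : ∑ i : Fin (2 * d) with i.val < d, (if i.val < d then 1 else L) = d := by
    rw [Finset.sum_congr rfl fun i hi => if_pos (Finset.mem_filter.1 hi).2, Finset.sum_const,
      Fin.card_filter_val_lt, min_eq_right (by lia), nsmul_one]
  rw [le_div_iff₀ (by positivity), ← hsum]
  exact (lmc_step_size_necessary_condition_general (fun i => by split_ifs <;> linarith) hμ hh0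
    hnoise ⟨hXb0, hXb⟩ (by simp +contextual) (Nat.one_le_iff_ne_zero.1 hk)).trans (by gcongr)

end
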